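/- arXiv:2312.15833 — 2 statements merged into one kernel-verified Lean document; each statement's English description precedes it below -/
import Mathlib

section
/- There exists a positive absolute constant C_0 ≥ 1 such that for every positive integer n, every β > 0, every j ∈ [n], every real u > 0, and every real v ≥ C_0 max{β^{-1}, 1}, one has P_{n,β}({σ ∈ S_n : |σ(j) - j| ≥ u}) ≤ 8⌈u⌉ exp(-v/8) + 2 exp(-u/v). -/
/-!
The proof counts crossings of cuts: `cross c σ` is the number of `i < c` with `σ i ≥ c`, which
equals the number of `i ≥ c` with `σ i < c`. Two exchange arguments, both comparing `σ` with
`σ * swap a b` and double counting the admissible pairs, carry the bound. Let `M = max β⁻¹ 1`.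

*Few crossings* (`cross_tail_step`, `cross_tail`). If `cross c σ ≥ t`, there are at least `t ^ 2`
pairs consisting of a rightward and a leftward crossing point of the cut `c`. Exchanging the images
of such a pair lowers `cross c` by one and multiplies the weight by a factor exponentially large in
the distances to the cut, so that the total weight of all moves into a given permutation is at most
a product of two geometric series, `≤ (3M) ^ 2`. Hence
`P(cross c ≥ t) ≤ (3M/t) ^ 2 P(cross c ≥ t-1)`, and iterating from `t = 48M` gives
`P(cross c ≥ v/16) ≤ exp(-v/8)` for `v ≥ 1536 M`.

*Hazard rate* (`hazard`). Let `j ≤ c ≤ c'` and suppose `σ j ≥ c'` while `cross c' σ ≤ d`. At least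
`c' - c - d` of the values in `[c, c')` are taken at points `x < c'`. Exchanging the images of `j`
and such an `x` makes `j` land in `[c, c')`, increases neither the total displacement nor any
crossing number, and is undone by choosing `x` among the at most `d` points crossing `c'`. Therefore
`(c' - c) P(σ j ≥ c', G) ≤ d P(σ j ≥ c, G)` on any event `G` that bounds crossing numbers.

Applying the second estimate along cuts spaced by about `3v/16` with `d = v/16`, and the first one
to the exceptional event, bounds the right tail (`right_tail`); the left tail follows by reversing
the order of `[n]`. For `u/v < 1/3` the claimed bound exceeds `1`.
-/

open scoped BigOperators Classical

/-- The (unnormalized) Mallows weight `exp(-β ∑ᵢ |σ(i) - i|)` for the `L¹` distance.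
Permutations of `[n] = {1, …, n}` are modeled as permutations of `Fin n`. -/
noncomputable def mallowsWeight (n : ℕ) (β : ℝ) (σ : Equiv.Perm (Fin n)) : ℝ :=
  Real.exp (-β * ∑ i : Fin n, |((σ i : ℕ) : ℝ) - ((i : ℕ) : ℝ)|)

/-- The probability of `σ` under the Mallows permutation model `P_{n,β}`. -/
noncomputable def mallowsProb (n : ℕ) (β : ℝ) (σ : Equiv.Perm (Fin n)) : ℝ :=
  mallowsWeight n β σ / ∑ τ : Equiv.Perm (Fin n), mallowsWeight n β τ

/-- The probability of the event `p` under the Mallows permutation model `P_{n,β}`. -/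
noncomputable def mallowsP (n : ℕ) (β : ℝ) (p : Equiv.Perm (Fin n) → Prop) : ℝ :=
  ∑ σ : Equiv.Perm (Fin n), if p σ then mallowsProb n β σ else 0

namespace MallowsL1

/-! ### Indicators, masses and crossings -/

/-- The indicator of a proposition, with values in `ℝ`. -/
noncomputable def ind (p : Prop) : ℝ := if p then 1 else 0

lemma ind_true {p : Prop} (h : p) : ind p = 1 := if_pos h
lemma ind_false {p : Prop} (h : ¬ p) : ind p = 0 := if_neg h
lemma ind_nonneg (p : Prop) : 0 ≤ ind p := by unfold ind; split_ifs <;> norm_num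
lemma ind_mono {p q : Prop} (h : p → q) : ind p ≤ ind q := by
  by_cases hp : p
  · rw [ind_true hp, ind_true (h hp)]
  · rw [ind_false hp]; exact ind_nonneg q

/-- The unnormalized Mallows measure of the event `p`. -/
noncomputable def mass (n : ℕ) (β : ℝ) (p : Equiv.Perm (Fin n) → Prop) : ℝ :=
  ∑ σ : Equiv.Perm (Fin n), ind (p σ) * mallowsWeight n β σ

/-- The number (as a real) of points crossing the cut `c` from left to right: those `i < c` with
`σ i ≥ c`, where positions are counted from `0`. -/
noncomputable def cross {n : ℕ} (c : ℕ) (σ : Equiv.Perm (Fin n)) : ℝ :=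
  ∑ i : Fin n, ind ((i : ℕ) < c ∧ c ≤ (σ i : ℕ))

lemma weight_pos (n : ℕ) (β : ℝ) (σ : Equiv.Perm (Fin n)) : 0 < mallowsWeight n β σ :=
  Real.exp_pos _

lemma mass_mono {n : ℕ} {β : ℝ} {p q : Equiv.Perm (Fin n) → Prop} (h : ∀ σ, p σ → q σ) :
    mass n β p ≤ mass n β q :=
  Finset.sum_le_sum fun σ _ =>
    mul_le_mul_of_nonneg_right (ind_mono (h σ)) (weight_pos n β σ).le

lemma mass_nonneg (n : ℕ) (β : ℝ) (p : Equiv.Perm (Fin n) → Prop) : 0 ≤ mass n β p :=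
  Finset.sum_nonneg fun σ _ => mul_nonneg (ind_nonneg _) (weight_pos n β σ).le

lemma mass_or {n : ℕ} {β : ℝ} (p q : Equiv.Perm (Fin n) → Prop) :
    mass n β (fun σ => p σ ∨ q σ) ≤ mass n β p + mass n β q := by
  unfold mass
  rw [← Finset.sum_add_distrib]
  refine Finset.sum_le_sum fun σ _ => ?_
  rw [← add_mul]
  refine mul_le_mul_of_nonneg_right ?_ (weight_pos n β σ).le
  unfold ind
  split_ifs <;> simp_all

lemma mallowsP_eq (n : ℕ) (β : ℝ) (p : Equiv.Perm (Fin n) → Prop) :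
    mallowsP n β p = mass n β p / mass n β (fun _ => True) := by
  unfold mallowsP mass mallowsProb ind
  rw [Finset.sum_div]
  refine Finset.sum_congr rfl fun σ _ => ?_
  split_ifs <;> simp

lemma mass_true_pos (n : ℕ) (β : ℝ) : 0 < mass n β (fun _ => True) :=
  Finset.sum_pos (fun σ _ => by rw [ind_true trivial, one_mul]; exact weight_pos n β σ)
    Finset.univ_nonempty

/-- Precomposing `σ` with a transposition exchanges the images of two points, so only two terms of
a sum over the graph of `σ` change. -/
lemma sum_mul_swap {n : ℕ} (F : Fin n → Fin n → ℝ) (σ : Equiv.Perm (Fin n)) {a b : Fin n}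
    (hab : a ≠ b) :
    ∑ i, F i ((σ * Equiv.swap a b) i)
      = ∑ i, F i (σ i) + (F a (σ b) + F b (σ a) - F a (σ a) - F b (σ b)) := by
  rw [← sub_eq_iff_eq_add', ← Finset.sum_sub_distrib, Fintype.sum_eq_add a b hab]
  · simp; ring
  · rintro x ⟨h1, h2⟩
    simp [Equiv.swap_apply_of_ne_of_ne h1 h2]

lemma weight_mul_swap {n : ℕ} (β : ℝ) (σ : Equiv.Perm (Fin n)) {a b : Fin n} (hab : a ≠ b) :
    mallowsWeight n β (σ * Equiv.swap a b) = mallowsWeight n β σ *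
      Real.exp (-β * (|((σ b : ℕ) : ℝ) - (a : ℕ)| + |((σ a : ℕ) : ℝ) - (b : ℕ)|
        - |((σ a : ℕ) : ℝ) - (a : ℕ)| - |((σ b : ℕ) : ℝ) - (b : ℕ)|)) := by
  unfold mallowsWeight
  rw [← Real.exp_add, sum_mul_swap (fun i y => |((y : ℕ) : ℝ) - (i : ℕ)|) σ hab]
  ring_nf

lemma cross_mul_swap {n : ℕ} (c : ℕ) (σ : Equiv.Perm (Fin n)) {a b : Fin n} (hab : a ≠ b) :
    cross c (σ * Equiv.swap a b) = cross c σ +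
      (ind ((a : ℕ) < c ∧ c ≤ (σ b : ℕ)) + ind ((b : ℕ) < c ∧ c ≤ (σ a : ℕ))
        - ind ((a : ℕ) < c ∧ c ≤ (σ a : ℕ)) - ind ((b : ℕ) < c ∧ c ≤ (σ b : ℕ))) :=
  sum_mul_swap (fun i y => ind ((i : ℕ) < c ∧ c ≤ (y : ℕ))) σ hab

/-- As many points cross the cut `c` leftwards as rightwards. -/
lemma cross_eq_back {n : ℕ} (c : ℕ) (σ : Equiv.Perm (Fin n)) :
    cross c σ = ∑ i : Fin n, ind (c ≤ (i : ℕ) ∧ (σ i : ℕ) < c) := by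
  have h : ∑ i : Fin n, ind ((σ i : ℕ) < c) = ∑ i : Fin n, ind ((i : ℕ) < c) :=
    Equiv.sum_comp σ (fun i : Fin n => ind ((i : ℕ) < c))
  rw [← sub_eq_zero]
  rw [eq_comm, ← sub_eq_zero, ← Finset.sum_sub_distrib] at h
  unfold cross
  rw [← Finset.sum_sub_distrib, ← h]
  refine Finset.sum_congr rfl fun i _ => ?_
  unfold ind
  split_ifs <;> first | omega | norm_num

/-! ### Tail of the number of crossings -/

/-- A geometric series of ratio `exp(-2β)` sums to at most `1 + 1/(2β) ≤ 3M/2`. -/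
lemma geom_bound {ι : Type*} {β M : ℝ} (hβ : 0 < β) (hM : max β⁻¹ 1 = M) (s : Finset ι) (φ : ι → ℕ)
    (hφ : Set.InjOn φ s) : ∑ y ∈ s, Real.exp (-(2 * β) * φ y) ≤ 3 / 2 * M := by
  have hq0 : 0 ≤ Real.exp (-(2 * β)) := (Real.exp_pos _).le
  have hq1 : Real.exp (-(2 * β)) < 1 := by rw [Real.exp_lt_one_iff]; linarith
  have h1 : ∑ y ∈ s, Real.exp (-(2 * β)* φ y) = ∑ k ∈ s.image φ, Real.exp (-(2 * β)) ^ k := by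
    rw [Finset.sum_image hφ]
    refine Finset.sum_congr rfl fun y _ => ?_
    rw [← Real.exp_nat_mul]; ring_nf
  rw [h1]
  refine (Summable.sum_le_tsum _ (fun k _ => pow_nonneg hq0 k)
    (summable_geometric_of_lt_one hq0 hq1)).trans ?_
  rw [tsum_geometric_of_lt_one hq0 hq1]
  have hMβ : β⁻¹ ≤ M := hM ▸ le_max_left _ _
  have hM1 : 1 ≤ M := hM ▸ le_max_right _ _
  -- `e^{-x} ≤ 1/(1+x)` gives `1/(1-e^{-x}) ≤ 1 + 1/x`
  have h2 : Real.exp (-(2 * β)) ≤ (1 + 2 * β)⁻¹ := by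
    rw [Real.exp_neg]
    apply inv_anti₀ (by positivity)
    linarith [Real.add_one_le_exp (2 * β)]
  have h3 : (1 - Real.exp (-(2 * β)))⁻¹ ≤ 1 + β⁻¹ / 2 := by
    rw [inv_le_comm₀ (by linarith) (by positivity)]
    have : (1 + β⁻¹ / 2)⁻¹ = 1 - (1 + 2 * β)⁻¹ := by field_simp; ring
    linarith
  linarith

/-- The exponent of the weight ratio between a configuration where `a ↦ y`, `b ↦ x` cross the cut
`c` in opposite directions and the one where they are uncrossed to `a ↦ x`, `b ↦ y`. The bound
splits into a term for each side of the cut. -/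
lemma uncross_energy {a b x y c β : ℝ} (hβ : 0 < β) (ha : a ≤ c - 1) (hx : x ≤ c - 1) (hb : c ≤ b)
    (hy : c ≤ y) :
    -β * (|y - a| + |x - b| - |x - a| - |y - b|)
      ≤ -(2 * β) * (c - 1 - max a x) + -(2 * β) * (min b y - c) := by
  have e1 : |x - a| = 2 * max a x - a - x := by
    rcases le_total a x with h | h
    · rw [max_eq_right h, abs_of_nonneg (by linarith)]; ring
    · rw [max_eq_left h, abs_of_nonpos (by linarith)]; ring
  have e2 : |y - b| = b + y - 2 * min b y := by
    rcases le_total b y with h | h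
    · rw [min_eq_left h, abs_of_nonneg (by linarith)]; ring
    · rw [min_eq_right h, abs_of_nonpos (by linarith)]; ring
  rw [e1, e2, abs_of_nonneg (by linarith : 0 ≤ y - a), abs_of_nonpos (by linarith : x - b ≤ 0)]
  nlinarith

/-- The weight `exp(-2β · depth)` of a point `y` left of the cut `c`, where the last point before
the cut has depth `0`; zero for points right of the cut. -/
noncomputable def depthL (β : ℝ) (c y : ℕ) : ℝ :=
  ind (y < c) * Real.exp (-(2 * β) * ((c : ℝ) - 1 - y))

/-- The weight `exp(-2β · depth)` of a point `y` right of the cut `c`, where the first point after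
the cut has depth `0`; zero for points left of the cut. -/
noncomputable def depthR (β : ℝ) (c y : ℕ) : ℝ :=
  ind (c ≤ y) * Real.exp (-(2 * β) * ((y : ℝ) - c))

lemma depthL_nonneg (β : ℝ) (c y : ℕ) : 0 ≤ depthL β c y :=
  mul_nonneg (ind_nonneg _) (Real.exp_pos _).le

lemma depthR_nonneg (β : ℝ) (c y : ℕ) : 0 ≤ depthR β c y :=
  mul_nonneg (ind_nonneg _) (Real.exp_pos _).le

lemma sum_depthL {n : ℕ} {β M : ℝ} (hβ : 0 < β) (hM : max β⁻¹ 1 = M) (c : ℕ)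
    (σ : Equiv.Perm (Fin n)) :
    ∑ a : Fin n, (depthL β c a + depthL β c (σ a)) ≤ 3 * M := by
  rw [Finset.sum_add_distrib, Equiv.sum_comp σ (fun a : Fin n => depthL β c a)]
  have : ∑ a : Fin n, depthL β c a ≤ 3 / 2 * M := by
    have := geom_bound hβ hM (Finset.univ.filter fun a : Fin n => (a : ℕ) < c)
      (fun a => c - 1 - (a : ℕ)) (by
        intro a ha b hb h
        simp at ha hb h
        ext; omega)
    refine le_trans (le_of_eq ?_) this
    rw [Finset.sum_filter]
    refine Finset.sum_congr rfl fun a _ => ?_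
    unfold depthL ind
    split_ifs with h
    · rw [Nat.cast_sub (by omega), Nat.cast_sub (by omega)]; simp
    · simp
  linarith

lemma sum_depthR {n : ℕ} {β M : ℝ} (hβ : 0 < β) (hM : max β⁻¹ 1 = M) (c : ℕ)
    (σ : Equiv.Perm (Fin n)) :
    ∑ a : Fin n, (depthR β c a + depthR β c (σ a)) ≤ 3 * M := by
  rw [Finset.sum_add_distrib, Equiv.sum_comp σ (fun a : Fin n => depthR β c a)]
  have : ∑ a : Fin n, depthR β c a ≤ 3 / 2 * M := by
    have := geom_bound hβ hM (Finset.univ.filter fun a : Fin n => c ≤ (a : ℕ))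
      (fun a => (a : ℕ) - c) (by
        intro a ha b hb h
        simp at ha hb h
        ext; omega)
    refine le_trans (le_of_eq ?_) this
    rw [Finset.sum_filter]
    refine Finset.sum_congr rfl fun a _ => ?_
    unfold depthR ind
    split_ifs with h
    · rw [Nat.cast_sub (by omega)]; simp
    · simp
  linarith

/-- Exchanging the images of a rightward crossing point `a` and a leftward crossing point `b` lowers
the number of crossings by one. The weight ratio is controlled by the depths, which is what makes
the sum over the pairs `(a, b)` of possible preimages bounded uniformly in `n`. Here `σ` is the permutation after the exchange. -/
lemma uncross_step {n : ℕ} {β : ℝ} (hβ : 0 < β) (c : ℕ) (t : ℝ) (σ : Equiv.Perm (Fin n))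
    (a b : Fin n) :
    ind (t ≤ cross c (σ * Equiv.swap a b)) * mallowsWeight n β (σ * Equiv.swap a b) *
        (ind ((a : ℕ) < c ∧ c ≤ ((σ * Equiv.swap a b) a : ℕ)) *
          ind (c ≤ (b : ℕ) ∧ ((σ * Equiv.swap a b) b : ℕ) < c))
      ≤ ind (t - 1 ≤ cross c σ) * mallowsWeight n β σ *
        ((depthL β c a + depthL β c (σ a)) * (depthR β c b + depthR β c (σ b))) := by
  have hR : 0 ≤ ind (t - 1 ≤ cross c σ) * mallowsWeight n β σ *
        ((depthL β c a + depthL β c (σ a)) * (depthR β c b + depthR β c (σ b))) :=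
    mul_nonneg (mul_nonneg (ind_nonneg _) (weight_pos n β σ).le)
      (mul_nonneg (add_nonneg (depthL_nonneg _ _ _) (depthL_nonneg _ _ _))
        (add_nonneg (depthR_nonneg _ _ _) (depthR_nonneg _ _ _)))
  have ea : (σ * Equiv.swap a b) a = σ b := by simp
  have eb : (σ * Equiv.swap a b) b = σ a := by simp
  rw [ea, eb]
  by_cases h : ((a : ℕ) < c ∧ c ≤ (σ b : ℕ)) ∧ (c ≤ (b : ℕ) ∧ (σ a : ℕ) < c)
  swap
  · have : ind ((a : ℕ) < c ∧ c ≤ (σ b : ℕ)) * ind (c ≤ (b : ℕ) ∧ (σ a : ℕ) < c) = 0 := by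
      rw [not_and_or] at h
      rcases h with h | h <;> rw [ind_false h] <;> simp
    rw [this, mul_zero]; exact hR
  obtain ⟨⟨h1, h2⟩, h3, h4⟩ := h
  have hab : a ≠ b := by rintro rfl; omega
  have hcross : cross c (σ * Equiv.swap a b) = cross c σ + 1 := by
    rw [cross_mul_swap c σ hab, ind_true ⟨h1, h2⟩, ind_false (by omega), ind_false (by omega),
      ind_false (by omega)]
    ring
  have i1 : ind ((a : ℕ) < c ∧ c ≤ (σ b : ℕ)) = 1 := ind_true ⟨h1, h2⟩
  have i2 : ind (c ≤ (b : ℕ) ∧ (σ a : ℕ) < c) = 1 := ind_true ⟨h3, h4⟩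
  rw [i1, i2, hcross, weight_mul_swap β σ hab, mul_one, mul_one]
  have hi : ind (t ≤ cross c σ + 1) = ind (t - 1 ≤ cross c σ) := by
    congr 1; rw [sub_le_iff_le_add]
  rw [hi, mul_assoc (ind _)]
  refine mul_le_mul_of_nonneg_left (mul_le_mul_of_nonneg_left ?_ (weight_pos n β σ).le)
    (ind_nonneg _)
  have h1' : ((a : ℕ) : ℝ) ≤ (c : ℝ) - 1 := by
    rw [le_sub_iff_add_le]; exact_mod_cast h1
  have h4' : ((σ a : ℕ) : ℝ) ≤ (c : ℝ) - 1 := by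
    rw [le_sub_iff_add_le]; exact_mod_cast h4
  refine (Real.exp_le_exp.2 (uncross_energy hβ h1' h4'
    (by exact_mod_cast h3) (by exact_mod_cast h2))).trans ?_
  rw [Real.exp_add]
  refine mul_le_mul ?_ ?_ (Real.exp_pos _).le
    (add_nonneg (depthL_nonneg _ _ _) (depthL_nonneg _ _ _))
  · unfold depthL
    rw [ind_true h1, ind_true h4, one_mul, one_mul]
    rcases max_choice ((a : ℕ) : ℝ) ((σ a : ℕ) : ℝ) with h | h <;> rw [h]
    · exact le_add_of_nonneg_right (Real.exp_pos _).le
    · exact le_add_of_nonneg_left (Real.exp_pos _).le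
  · unfold depthR
    rw [ind_true h2, ind_true h3, one_mul, one_mul]
    rcases min_choice ((b : ℕ) : ℝ) ((σ b : ℕ) : ℝ) with h | h <;> rw [h]
    · exact le_add_of_nonneg_right (Real.exp_pos _).le
    · exact le_add_of_nonneg_left (Real.exp_pos _).le

/-- Double counting of the uncrossing moves: a permutation with at least `t` crossings admits at
least `t ^ 2` of them, and the weighted number of moves leading to a given permutation is at most
`(3M) ^ 2`. -/
lemma cross_tail_step {n : ℕ} {β M : ℝ} (hβ : 0 < β) (hM : max β⁻¹ 1 = M) (c : ℕ) {t : ℝ}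
    (ht : 0 ≤ t) :
    t ^ 2 * mass n β (fun σ => t ≤ cross c σ)
      ≤ 9 * M ^ 2 * mass n β (fun σ => t - 1 ≤ cross c σ) := by
  have hM0 : 0 ≤ M := le_trans zero_le_one (hM ▸ le_max_right _ _)
  calc t ^ 2 * mass n β (fun σ => t ≤ cross c σ)
      ≤ ∑ σ : Equiv.Perm (Fin n), ind (t ≤ cross c σ) * mallowsWeight n β σ *
          ((∑ a : Fin n, ind ((a : ℕ) < c ∧ c ≤ (σ a : ℕ))) *
            ∑ b : Fin n, ind (c ≤ (b : ℕ) ∧ (σ b : ℕ) < c)) := by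
        unfold mass
        rw [Finset.mul_sum]
        refine Finset.sum_le_sum fun σ _ => ?_
        rw [← cross_eq_back]
        change _ ≤ _ * (cross c σ * cross c σ)
        by_cases h : t ≤ cross c σ
        · rw [mul_comm]
          refine mul_le_mul_of_nonneg_left ?_ (mul_nonneg (ind_nonneg _) (weight_pos n β σ).le)
          nlinarith
        · rw [ind_false h]; simp
    _ = ∑ a : Fin n, ∑ b : Fin n, ∑ σ : Equiv.Perm (Fin n),
          ind (t ≤ cross c σ) * mallowsWeight n β σ *
            (ind ((a : ℕ) < c ∧ c ≤ (σ a : ℕ)) * ind (c ≤ (b : ℕ) ∧ (σ b : ℕ) < c)) := by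
        simp_rw [Finset.sum_mul_sum, Finset.mul_sum]
        rw [Finset.sum_comm]
        exact Finset.sum_congr rfl fun a _ => Finset.sum_comm
    _ = ∑ a : Fin n, ∑ b : Fin n, ∑ σ : Equiv.Perm (Fin n),
          ind (t ≤ cross c (σ * Equiv.swap a b)) * mallowsWeight n β (σ * Equiv.swap a b) *
            (ind ((a : ℕ) < c ∧ c ≤ ((σ * Equiv.swap a b) a : ℕ)) *
              ind (c ≤ (b : ℕ) ∧ ((σ * Equiv.swap a b) b : ℕ) < c)) := by
        refine Finset.sum_congr rfl fun a _ => Finset.sum_congr rfl fun b _ => ?_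
        exact (Equiv.sum_comp (Equiv.mulRight (Equiv.swap a b))
          (fun σ : Equiv.Perm (Fin n) => ind (t ≤ cross c σ) * mallowsWeight n β σ *
            (ind ((a : ℕ) < c ∧ c ≤ (σ a : ℕ)) * ind (c ≤ (b : ℕ) ∧ (σ b : ℕ) < c)))).symm
    _ ≤ ∑ a : Fin n, ∑ b : Fin n, ∑ σ : Equiv.Perm (Fin n),
          ind (t - 1 ≤ cross c σ) * mallowsWeight n β σ *
            ((depthL β c a + depthL β c (σ a)) * (depthR β c b + depthR β c (σ b))) :=
        Finset.sum_le_sum fun a _ => Finset.sum_le_sum fun b _ => Finset.sum_le_sum fun σ _ =>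
          uncross_step hβ c t σ a b
    _ = ∑ σ : Equiv.Perm (Fin n), ind (t - 1 ≤ cross c σ) * mallowsWeight n β σ *
          ((∑ a : Fin n, (depthL β c a + depthL β c (σ a))) *
            ∑ b : Fin n, (depthR β c b + depthR β c (σ b))) := by
        simp_rw [Finset.sum_mul_sum, Finset.mul_sum]
        rw [eq_comm, Finset.sum_comm]
        exact Finset.sum_congr rfl fun a _ => Finset.sum_comm
    _ ≤ 9 * M ^ 2 * mass n β (fun σ => t - 1 ≤ cross c σ) := by
        unfold mass
        rw [Finset.mul_sum]
        refine Finset.sum_le_sum fun σ _ => ?_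
        rw [mul_comm (9 * M ^ 2)]
        refine mul_le_mul_of_nonneg_left ?_ (mul_nonneg (ind_nonneg _) (weight_pos n β σ).le)
        calc _ ≤ (3 * M) * (3 * M) := mul_le_mul (sum_depthL hβ hM c σ) (sum_depthR hβ hM c σ)
              (Finset.sum_nonneg fun b _ => add_nonneg (depthR_nonneg _ _ _) (depthR_nonneg _ _ _))
              (by positivity)
          _ = 9 * M ^ 2 := by ring

lemma exp_five_le : Real.exp 5 ≤ 256 := by
  have h : Real.exp 5 = Real.exp 1 ^ 5 := by rw [← Real.exp_nat_mul]; norm_num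
  rw [h]
  calc Real.exp 1 ^ 5 ≤ 3 ^ 5 :=
        pow_le_pow_left₀ (Real.exp_pos _).le (by linarith [Real.exp_one_lt_d9]) 5
    _ ≤ 256 := by norm_num

lemma cross_tail_iter {n : ℕ} {β M : ℝ} (hβ : 0 < β) (hM : max β⁻¹ 1 = M) (c m : ℕ) :
    ∀ t : ℝ, 48 * M + m ≤ t →
      mass n β (fun σ => t ≤ cross c σ) ≤ Real.exp (-5 * m) * mass n β (fun _ => True) := by
  have hM1 : 1 ≤ M := hM ▸ le_max_right _ _
  induction m with
  | zero =>
    intro t _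
    simpa using mass_mono (n := n) (β := β) (p := fun σ => t ≤ cross c σ) fun σ _ => trivial
  | succ m ih =>
    intro t ht
    push_cast at ht
    have h1 := ih (t - 1) (by linarith)
    have hm : (0 : ℝ) ≤ m := Nat.cast_nonneg m
    have h2 := cross_tail_step (n := n) hβ hM c (t := t) (by nlinarith)
    have h3 : 256 * mass n β (fun σ => t ≤ cross c σ)
        ≤ mass n β (fun σ => t - 1 ≤ cross c σ) := by
      have h4 : (48 * M) ^ 2 * mass n β (fun σ => t ≤ cross c σ)
          ≤ 9 * M ^ 2 * mass n β (fun σ => t - 1 ≤ cross c σ) := by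
        refine le_trans (mul_le_mul_of_nonneg_right ?_ (mass_nonneg _ _ _)) h2
        exact pow_le_pow_left₀ (by positivity) (by linarith) 2
      have h5 : 9 * M ^ 2 * (256 * mass n β (fun σ => t ≤ cross c σ))
          ≤ 9 * M ^ 2 * mass n β (fun σ => t - 1 ≤ cross c σ) := by linarith
      exact le_of_mul_le_mul_left h5 (by positivity)
    have h6 : Real.exp 5 * mass n β (fun σ => t ≤ cross c σ)
        ≤ Real.exp (-5 * m) * mass n β (fun _ => True) :=
      (mul_le_mul_of_nonneg_right exp_five_le (mass_nonneg _ _ _)).trans (h3.trans h1)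
    have h7 : Real.exp (-5 * ((m + 1 : ℕ) : ℝ)) = Real.exp (-5 * m) / Real.exp 5 := by
      rw [← Real.exp_sub]; push_cast; ring_nf
    rw [h7, div_mul_eq_mul_div, le_div_iff₀ (Real.exp_pos _)]
    linarith

lemma cross_tail {n : ℕ} {β v : ℝ} (hβ : 0 < β) (hv : 1536 * max β⁻¹ 1 ≤ v) (c : ℕ) :
    mass n β (fun σ => v / 16 ≤ cross c σ) ≤ Real.exp (-v / 8) * mass n β (fun _ => True) := by
  have hM1 : 1 ≤ max β⁻¹ 1 := le_max_right _ _
  have hm := Nat.floor_le (show 0 ≤ v / 32 by linarith)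
  have hm' := Nat.lt_floor_add_one (v / 32)
  refine (cross_tail_iter (n := n) hβ rfl c ⌊v / 32⌋₊ (v / 16) (by linarith)).trans ?_
  refine mul_le_mul_of_nonneg_right (Real.exp_le_exp.2 ?_) (mass_nonneg _ _ _)
  linarith

/-! ### Hazard rate of a rightward crossing -/

/-- If `j ↦ b`, `x ↦ m` with `j ≤ m ≤ b` and `x ≤ b`, exchanging the two images does not increase
the total displacement. -/
lemma hazard_energy {j b x m : ℝ} (hjm : j ≤ m) (hmb : m ≤ b) (hxb : x ≤ b) :
    |m - j| + |b - x| - |b - j| - |m - x| ≤ 0 := by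
  rw [abs_of_nonneg (by linarith : 0 ≤ m - j), abs_of_nonneg (by linarith : 0 ≤ b - x),
    abs_of_nonneg (by linarith : 0 ≤ b - j)]
  linarith [le_abs_self (m - x)]

/-- If `j` jumps over the cut `c'`, exchanging its image with that of a point `x < c'` whose image
lies in `[c, c')` makes `j` land in `[c, c')`, does not decrease the weight, stays inside `G`, and
turns `x` into a point crossing `c'`. Here `σ` is the permutation after the exchange. -/
lemma hazard_step {n : ℕ} {β : ℝ} (hβ : 0 < β) (G : Equiv.Perm (Fin n) → Prop)
    (hG : ∀ σ τ : Equiv.Perm (Fin n), (∀ e, cross e τ ≤ cross e σ) → G σ → G τ)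
    (j : Fin n) {c c' : ℕ} (hj : (j : ℕ) ≤ c) (σ : Equiv.Perm (Fin n)) (x : Fin n) :
    ind (c' ≤ ((σ * Equiv.swap j x) j : ℕ) ∧ G (σ * Equiv.swap j x)) *
        mallowsWeight n β (σ * Equiv.swap j x) *
        ind ((x : ℕ) < c' ∧ c ≤ ((σ * Equiv.swap j x) x : ℕ) ∧ ((σ * Equiv.swap j x) x : ℕ) < c')
      ≤ ind ((c ≤ (σ j : ℕ) ∧ (σ j : ℕ) < c') ∧ G σ) * mallowsWeight n β σ *
        ind ((x : ℕ) < c' ∧ c' ≤ (σ x : ℕ)) := by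
  have hR : 0 ≤ ind ((c ≤ (σ j : ℕ) ∧ (σ j : ℕ) < c') ∧ G σ) * mallowsWeight n β σ *
        ind ((x : ℕ) < c' ∧ c' ≤ (σ x : ℕ)) :=
    mul_nonneg (mul_nonneg (ind_nonneg _) (weight_pos n β σ).le) (ind_nonneg _)
  have ea : (σ * Equiv.swap j x) j = σ x := by simp
  have eb : (σ * Equiv.swap j x) x = σ j := by simp
  rw [ea, eb]
  by_cases h1 : c' ≤ (σ x : ℕ) ∧ G (σ * Equiv.swap j x)
  swap
  · rw [ind_false h1]; simpa using hR
  by_cases h2 : (x : ℕ) < c' ∧ c ≤ (σ j : ℕ) ∧ (σ j : ℕ) < c'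
  swap
  · rw [ind_false h2]; simpa using hR
  obtain ⟨h1, hg⟩ := h1
  obtain ⟨h2, h3, h4⟩ := h2
  have hjx : j ≠ x := by rintro rfl; omega
  have hcr : ∀ e, cross e σ ≤ cross e (σ * Equiv.swap j x) := by
    intro e
    rw [cross_mul_swap e σ hjx]
    unfold ind
    split_ifs <;> first | omega | norm_num
  have hgs : G σ := hG _ _ hcr hg
  rw [ind_true ⟨h1, hg⟩, ind_true ⟨h2, h3, h4⟩, ind_true ⟨⟨h3, h4⟩, hgs⟩, ind_true ⟨h2, h1⟩,
    weight_mul_swap β σ hjx]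
  simp only [one_mul, mul_one]
  refine mul_le_of_le_one_right (weight_pos n β σ).le ?_
  rw [Real.exp_le_one_iff]
  have := hazard_energy (j := (j : ℕ)) (b := (σ x : ℕ)) (x := (x : ℕ)) (m := (σ j : ℕ))
    (by exact_mod_cast hj.trans h3) (by exact_mod_cast (by omega)) (by exact_mod_cast (by omega))
  nlinarith

/-- Of the `c' - c` values in `[c, c')`, only those taken by leftward crossing points of `c'` are not
attained to the left of `c'`. -/
lemma hazard_count {n : ℕ} (σ : Equiv.Perm (Fin n)) {c c' : ℕ} (hcc : c ≤ c') (hc' : c' ≤ n) :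
    (c' : ℝ) - c - cross c' σ
      ≤ ∑ x : Fin n, ind ((x : ℕ) < c' ∧ c ≤ (σ x : ℕ) ∧ (σ x : ℕ) < c') := by
  have h1 : ∑ x : Fin n, ind (c ≤ (σ x : ℕ) ∧ (σ x : ℕ) < c') = (c' : ℝ) - c := by
    rw [Equiv.sum_comp σ (fun y : Fin n => ind (c ≤ (y : ℕ) ∧ (y : ℕ) < c')),
      Fin.sum_univ_eq_sum_range (fun y => ind (c ≤ y ∧ y < c'))]
    have hsub : Finset.Ico c c' ⊆ Finset.range n := fun y hy => by
      rw [Finset.mem_Ico] at hy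
      rw [Finset.mem_range]
      omega
    rw [← Finset.sum_subset hsub fun y _ hy => ind_false (by rwa [Finset.mem_Ico] at hy),
      Finset.sum_congr rfl fun y hy => ind_true (Finset.mem_Ico.1 hy),
      Finset.sum_const, Nat.card_Ico, nsmul_eq_mul, Nat.cast_sub hcc, mul_one]
  rw [← h1, cross_eq_back, ← Finset.sum_sub_distrib]
  refine Finset.sum_le_sum fun x _ => ?_
  unfold ind
  split_ifs <;> first | omega | norm_num

/-- Double counting of the exchanges of `hazard_step`: each permutation with `σ j ≥ c'` admits at
least `c' - c - d` of them, and each permutation with `c ≤ σ j < c'` arises from at most `d`. -/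
lemma hazard {n : ℕ} {β d : ℝ} (hβ : 0 < β) (G : Equiv.Perm (Fin n) → Prop)
    (hG : ∀ σ τ : Equiv.Perm (Fin n), (∀ e, cross e τ ≤ cross e σ) → G σ → G τ)
    (j : Fin n) {c c' : ℕ} (hj : (j : ℕ) ≤ c) (hcc : c ≤ c')
    (hd : ∀ σ, G σ → cross c' σ ≤ d) :
    ((c' : ℝ) - c) * mass n β (fun σ => c' ≤ (σ j : ℕ) ∧ G σ)
      ≤ d * mass n β (fun σ => c ≤ (σ j : ℕ) ∧ G σ) := by
  have key : ((c' : ℝ) - c - d) * mass n β (fun σ => c' ≤ (σ j : ℕ) ∧ G σ)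
      ≤ d * mass n β (fun σ => (c ≤ (σ j : ℕ) ∧ (σ j : ℕ) < c') ∧ G σ) := by
    calc ((c' : ℝ) - c - d) * mass n β (fun σ => c' ≤ (σ j : ℕ) ∧ G σ)
        ≤ ∑ σ : Equiv.Perm (Fin n), ind (c' ≤ (σ j : ℕ) ∧ G σ) * mallowsWeight n β σ *
            ∑ x : Fin n, ind ((x : ℕ) < c' ∧ c ≤ (σ x : ℕ) ∧ (σ x : ℕ) < c') := by
          unfold mass
          rw [Finset.mul_sum]
          refine Finset.sum_le_sum fun σ _ => ?_
          by_cases h : c' ≤ (σ j : ℕ) ∧ G σ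
          · rw [mul_comm]
            refine mul_le_mul_of_nonneg_left ?_ (mul_nonneg (ind_nonneg _) (weight_pos n β σ).le)
            linarith [hazard_count σ hcc (h.1.trans (σ j).isLt.le), hd σ h.2]
          · rw [ind_false h]; simp
      _ = ∑ x : Fin n, ∑ σ : Equiv.Perm (Fin n),
            ind (c' ≤ (σ j : ℕ) ∧ G σ) * mallowsWeight n β σ *
              ind ((x : ℕ) < c' ∧ c ≤ (σ x : ℕ) ∧ (σ x : ℕ) < c') := by
          simp_rw [Finset.mul_sum]
          exact Finset.sum_comm
      _ = ∑ x : Fin n, ∑ σ : Equiv.Perm (Fin n),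
            ind (c' ≤ ((σ * Equiv.swap j x) j : ℕ) ∧ G (σ * Equiv.swap j x)) *
              mallowsWeight n β (σ * Equiv.swap j x) *
              ind ((x : ℕ) < c' ∧ c ≤ ((σ * Equiv.swap j x) x : ℕ) ∧
                ((σ * Equiv.swap j x) x : ℕ) < c') := by
          refine Finset.sum_congr rfl fun x _ => ?_
          exact (Equiv.sum_comp (Equiv.mulRight (Equiv.swap j x))
            (fun σ : Equiv.Perm (Fin n) => ind (c' ≤ (σ j : ℕ) ∧ G σ) * mallowsWeight n β σ *
              ind ((x : ℕ) < c' ∧ c ≤ (σ x : ℕ) ∧ (σ x : ℕ) < c'))).symm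
      _ ≤ ∑ x : Fin n, ∑ σ : Equiv.Perm (Fin n),
            ind ((c ≤ (σ j : ℕ) ∧ (σ j : ℕ) < c') ∧ G σ) * mallowsWeight n β σ *
              ind ((x : ℕ) < c' ∧ c' ≤ (σ x : ℕ)) :=
          Finset.sum_le_sum fun x _ => Finset.sum_le_sum fun σ _ => hazard_step hβ G hG j hj σ x
      _ = ∑ σ : Equiv.Perm (Fin n), ind ((c ≤ (σ j : ℕ) ∧ (σ j : ℕ) < c') ∧ G σ) *
            mallowsWeight n β σ * cross c' σ := by
          unfold cross
          simp_rw [Finset.mul_sum]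
          exact Finset.sum_comm
      _ ≤ d * mass n β (fun σ => (c ≤ (σ j : ℕ) ∧ (σ j : ℕ) < c') ∧ G σ) := by
          unfold mass
          rw [Finset.mul_sum]
          refine Finset.sum_le_sum fun σ _ => ?_
          by_cases h : (c ≤ (σ j : ℕ) ∧ (σ j : ℕ) < c') ∧ G σ
          · rw [mul_comm d]
            exact mul_le_mul_of_nonneg_left (hd σ h.2)
              (mul_nonneg (ind_nonneg _) (weight_pos n β σ).le)
          · rw [ind_false h]; simp
  have split : mass n β (fun σ => c ≤ (σ j : ℕ) ∧ G σ)
      = mass n β (fun σ => c' ≤ (σ j : ℕ) ∧ G σ)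
        + mass n β (fun σ => (c ≤ (σ j : ℕ) ∧ (σ j : ℕ) < c') ∧ G σ) := by
    unfold mass
    rw [← Finset.sum_add_distrib]
    refine Finset.sum_congr rfl fun σ _ => ?_
    rw [← add_mul]
    congr 1
    by_cases hg : G σ
    · simp only [hg, and_true]
      unfold ind
      split_ifs <;> first | omega | norm_num
    · simp [hg, ind]
  rw [split]
  linarith

/-! ### One-sided and two-sided tails -/

/-- Union bound. -/
lemma mass_exists_le {n : ℕ} {β : ℝ} (p : ℕ → Equiv.Perm (Fin n) → Prop) {B : ℝ}
    (hB : ∀ r, mass n β (p r) ≤ B) (R : ℕ) :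
    mass n β (fun σ => ∃ r < R, p r σ) ≤ R * B := by
  induction R with
  | zero => simp [mass, ind]
  | succ R ih =>
    have h := mass_or (β := β) (fun σ => ∃ r < R, p r σ) (p R)
    have h' : mass n β (fun σ => ∃ r < R + 1, p r σ)
        ≤ mass n β (fun σ => (∃ r < R, p r σ) ∨ p R σ) := by
      refine mass_mono fun σ => ?_
      rintro ⟨r, hr, hp⟩
      rcases Nat.lt_succ_iff_lt_or_eq.1 hr with h | rfl
      · exact Or.inl ⟨r, h, hp⟩
      · exact Or.inr hp
    push_cast
    linarith [hB R]

/-- The cuts `j + s, j + 2s, …, j + R s` with `s ≈ 3v/16` are all exceeded when `σ j ≥ j + u`.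
Either one of them has at least `v/16` crossings, or each costs a factor `1/3 ≤ exp(-1)`. -/
lemma right_tail {n : ℕ} {β u v : ℝ} (hβ : 0 < β) (hv : 1536 * max β⁻¹ 1 ≤ v)
    (hu : 0 < u) (huv : 1 / 3 ≤ u / v) (j : Fin n) :
    mass n β (fun σ => ((j : ℕ) : ℝ) + u ≤ (σ j : ℕ))
      ≤ (4 * (⌈u⌉ : ℝ) * Real.exp (-v / 8) + Real.exp (-u / v)) * mass n β (fun _ => True) := by
  have hM1 : 1 ≤ max β⁻¹ 1 := le_max_right _ _
  have hv0 : 0 < v := by linarith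
  set Z := mass n β (fun _ => True) with hZ
  have hZ0 : 0 ≤ Z := mass_nonneg _ _ _
  set s : ℕ := ⌈3 * (v / 16)⌉₊ with hs
  have hs1 : 3 * (v / 16) ≤ s := Nat.le_ceil _
  have hs2 : (s : ℝ) ≤ v / 4 := by
    have := Nat.ceil_lt_add_one (show 0 ≤ 3 * (v / 16) by positivity)
    linarith
  have hs0 : (0 : ℝ) < s := by linarith
  have hs1' : (1 : ℝ) ≤ s := by linarith
  set R : ℕ := ⌊u / s⌋₊ with hR
  have hR1 : (R : ℝ) ≤ u / s := Nat.floor_le (by positivity)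
  have hR2 : u / s < R + 1 := Nat.lt_floor_add_one _
  set G : Equiv.Perm (Fin n) → Prop :=
    fun σ => ∀ r < R, cross ((j : ℕ) + s * (r + 1)) σ ≤ v / 16 with hGdef
  have hG : ∀ σ τ : Equiv.Perm (Fin n), (∀ e, cross e τ ≤ cross e σ) → G σ → G τ :=
    fun σ τ h hg r hr => (h _).trans (hg r hr)
  have iter : ∀ r ≤ R, mass n β (fun σ => (j : ℕ) + s * r ≤ (σ j : ℕ) ∧ G σ)
      ≤ Real.exp (-(r : ℝ)) * Z := by
    intro r
    induction r with
    | zero => intro _; simpa using mass_mono (n := n) (β := β) fun σ _ => trivial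
    | succ r ih =>
      intro hr
      have h1 := ih (by omega)
      have h2 := hazard hβ G hG j (c := (j : ℕ) + s * r) (c' := (j : ℕ) + s * (r + 1))
        (by omega) (by nlinarith) (fun σ hg => hg r (by omega))
      have e : ((((j : ℕ) + s * (r + 1) : ℕ) : ℝ)) - (((j : ℕ) + s * r : ℕ) : ℝ) = s := by
        push_cast; ring
      rw [e] at h2
      set A := mass n β (fun σ => (j : ℕ) + s * (r + 1) ≤ (σ j : ℕ) ∧ G σ)
      set B := mass n β (fun σ => (j : ℕ) + s * r ≤ (σ j : ℕ) ∧ G σ)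
      have hA : 0 ≤ A := mass_nonneg _ _ _
      have h3 : 3 * A ≤ B := by
        have : (v / 16) * (3 * A) ≤ (v / 16) * B := by nlinarith
        exact le_of_mul_le_mul_left this (by positivity)
      have h4 : Real.exp 1 * A ≤ Real.exp (-(r : ℝ)) * Z := by
        nlinarith [Real.exp_one_lt_d9]
      have h5 : Real.exp (-((r + 1 : ℕ) : ℝ)) = Real.exp (-(r : ℝ)) / Real.exp 1 := by
        rw [← Real.exp_sub]; push_cast; ring_nf
      rw [h5, div_mul_eq_mul_div, le_div_iff₀ (Real.exp_pos _)]
      linarith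
  have hbad := mass_exists_le (n := n) (β := β)
    (fun r σ => v / 16 ≤ cross ((j : ℕ) + s * (r + 1)) σ) (fun r => cross_tail hβ hv _) R
  have hsplit : mass n β (fun σ => ((j : ℕ) : ℝ) + u ≤ (σ j : ℕ))
      ≤ mass n β (fun σ => ∃ r < R, v / 16 ≤ cross ((j : ℕ) + s * (r + 1)) σ)
        + mass n β (fun σ => (j : ℕ) + s * R ≤ (σ j : ℕ) ∧ G σ) := by
    refine le_trans (mass_mono fun σ h => ?_) (mass_or _ _)
    by_cases hg : G σ
    · right
      refine ⟨?_, hg⟩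
      have : (s : ℝ) * R ≤ u := by rwa [le_div_iff₀ hs0, mul_comm] at hR1
      have h' : (((j : ℕ) + s * R : ℕ) : ℝ) ≤ ((σ j : ℕ) : ℝ) := by push_cast; linarith
      exact_mod_cast h'
    · left
      simp only [hGdef, not_forall, not_le] at hg
      obtain ⟨r, hr, h⟩ := hg
      exact ⟨r, hr, h.le⟩
  have hRu : (R : ℝ) ≤ 4 * (⌈u⌉ : ℝ) := by
    have h1 : u / s ≤ u := div_le_self hu.le hs1'
    linarith [Int.le_ceil u]
  -- `R > u/s - 1 ≥ 4u/v - 1 ≥ u/v`, the last step because `u/v ≥ 1/3`.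
  have hRexp : Real.exp (-(R : ℝ)) ≤ Real.exp (-u / v) := by
    apply Real.exp_le_exp.2
    have h1 : 4 * (u / v) ≤ u / s := by
      rw [show 4 * (u / v) = u / (v / 4) by field_simp]
      exact div_le_div_of_nonneg_left hu.le hs0 hs2
    rw [neg_div]
    linarith
  have h1 : (R : ℝ) * (Real.exp (-v / 8) * Z) ≤ 4 * (⌈u⌉ : ℝ) * (Real.exp (-v / 8) * Z) :=
    mul_le_mul_of_nonneg_right hRu (mul_nonneg (Real.exp_pos _).le hZ0)
  have h2 := mul_le_mul_of_nonneg_right hRexp hZ0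
  have h3 := iter R le_rfl
  linarith

lemma weight_rev {n : ℕ} (β : ℝ) (σ : Equiv.Perm (Fin n)) :
    mallowsWeight n β (Fin.revPerm.permCongr σ) = mallowsWeight n β σ := by
  unfold mallowsWeight
  congr 2
  rw [← Equiv.sum_comp Fin.revPerm]
  refine Finset.sum_congr rfl fun i _ => ?_
  simp only [Equiv.permCongr_apply, Fin.revPerm_symm, Fin.revPerm_apply, Fin.rev_rev, Fin.val_rev]
  rw [Nat.cast_sub (σ i).isLt, Nat.cast_sub i.isLt, abs_sub_comm]
  push_cast
  congr 1; ring

/-- Reversing the order of the positions exchanges left and right jumps. -/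
lemma left_tail_eq {n : ℕ} (β u : ℝ) (j : Fin n) :
    mass n β (fun σ => ((σ j : ℕ) : ℝ) + u ≤ (j : ℕ))
      = mass n β (fun σ => ((Fin.rev j : ℕ) : ℝ) + u ≤ (σ (Fin.rev j) : ℕ)) := by
  unfold mass
  rw [← Equiv.sum_comp (Fin.revPerm (n := n)).permCongr]
  refine Finset.sum_congr rfl fun σ _ => ?_
  rw [weight_rev]
  congr 2
  simp only [Equiv.permCongr_apply, Fin.revPerm_symm, Fin.revPerm_apply, Fin.val_rev]
  rw [Nat.cast_sub (σ (Fin.rev j)).isLt, Nat.cast_sub j.isLt]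
  push_cast
  apply propext
  constructor <;> intro h <;> linarith

end MallowsL1

open MallowsL1 in
/-- There is an absolute constant `C₀ ≥ 1` such that for all `n ≥ 1`, `β > 0`, `j ∈ [n]`,
`u > 0`, `v ≥ C₀ max{β⁻¹, 1}`:
`P_{n,β}(|σ(j) - j| ≥ u) ≤ 8⌈u⌉ exp(-v/8) + 2 exp(-u/v)`. -/
theorem statement6 :
    ∃ C₀ : ℝ, 1 ≤ C₀ ∧
      ∀ n : ℕ, 0 < n → ∀ β : ℝ, 0 < β → ∀ j : Fin n,
        ∀ u : ℝ, 0 < u → ∀ v : ℝ, C₀ * max β⁻¹ 1 ≤ v →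
          mallowsP n β (fun σ => u ≤ |((σ j : ℕ) : ℝ) - ((j : ℕ) : ℝ)|)
            ≤ 8 * (⌈u⌉ : ℝ) * Real.exp (-v / 8) + 2 * Real.exp (-u / v) := by
  refine ⟨1536, by norm_num, ?_⟩
  intro n _ β hβ j u hu v hv
  have hZ := mass_true_pos n β
  rw [mallowsP_eq, div_le_iff₀ hZ]
  by_cases huv : 1 / 3 ≤ u / v
  · have h1 := right_tail hβ hv hu huv j
    have h2 := right_tail hβ hv hu huv (Fin.rev j)
    rw [← left_tail_eq] at h2
    have h3 : mass n β (fun σ => u ≤ |((σ j : ℕ) : ℝ) - ((j : ℕ) : ℝ)|)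
        ≤ mass n β (fun σ => ((j : ℕ) : ℝ) + u ≤ (σ j : ℕ))
          + mass n β (fun σ => ((σ j : ℕ) : ℝ) + u ≤ (j : ℕ)) := by
      refine le_trans (mass_mono fun σ h => ?_) (mass_or _ _)
      rcases le_abs.1 h with h | h
      · left; linarith
      · right; linarith
    linarith
  · -- Here `2 exp(-u/v) ≥ 2 (1 - u/v) > 1`, so the bound exceeds the total mass.
    have h1 : mass n β (fun σ => u ≤ |((σ j : ℕ) : ℝ) - ((j : ℕ) : ℝ)|)
        ≤ mass n β (fun _ => True) := mass_mono fun _ _ => trivial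
    have h2 : 1 ≤ 2 * Real.exp (-u / v) := by
      have := Real.add_one_le_exp (-u / v)
      rw [neg_div] at this ⊢
      linarith
    have h3 : 0 ≤ 8 * (⌈u⌉ : ℝ) * Real.exp (-v / 8) := by
      have : (0 : ℝ) ≤ (⌈u⌉ : ℝ) := hu.le.trans (Int.le_ceil u)
      positivity
    nlinarith
end

section
/- There exists a positive absolute constant C such that for every positive integer n, every β ≥ 2, every j ∈ [n], and every positive integer u, one has P_{n,β}({σ ∈ S_n : |σ(j) - j| ≥ u}) ≤ C exp(-(2β + √u / 2)). -/
/-!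
The proof is a Peierls argument on cycles. If `σ` moves `j`, let `c` be the cycle of `σ` through
`j`. Erasing `c` (that is, passing to `σ c⁻¹`) multiplies the Mallows weight by `exp(β w(c))`, where
`w(c) = ∑ |c i - i|`, and `σ` is recovered from `c` and `σ c⁻¹`; hence a given cycle `c` occurs in
the Mallows permutation with probability at most `exp(-β w(c))`, and
`P(|σ j - j| ≥ u) ≤ ∑_c exp(-β w(c))`, the sum being over the cycles through `j` with
`|c j - j| ≥ u`.

Since the displacements `c i - i` add up to zero, such a cycle has `w(c) ≥ 2u`
(`two_mul_le_displacement`), so that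
`exp(-β w(c)) ≤ exp(-2u(β - 3/2)) exp(-(3/2) w(c))`. A cycle of length `k` through `j` is determined
by its `k` successive nonzero integer steps, so the sum of `exp(-(3/2) w(c))` over such cycles is at
most `(∑_{s ≠ 0} exp(-(3/2)|s|))^k ≤ (2/3)^k`, because `exp(-3/2) ≤ 1/4`. Summing over `k` gives at
most `3` (`sum_cycles_le`). Finally `2u(β - 3/2) ≥ 2β - 4 + √u/2` for `u ≥ 1` and `β ≥ 2`.
-/


open scoped BigOperators Classical

/-- The total displacement `∑ᵢ |σ(i) - i|` of a permutation of `Fin n`. -/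
noncomputable def displacement {n : ℕ} (σ : Equiv.Perm (Fin n)) : ℝ :=
  ∑ i : Fin n, |((σ i : ℕ) : ℝ) - ((i : ℕ) : ℝ)|

lemma mallowsWeight_eq {n : ℕ} (β : ℝ) (σ : Equiv.Perm (Fin n)) :
    mallowsWeight n β σ = Real.exp (-β * displacement σ) := rfl

/-- As the signed displacements sum to zero, one displacement of size `d` forces total
displacement at least `2d`. -/
lemma two_mul_le_displacement {n : ℕ} (σ : Equiv.Perm (Fin n)) (j : Fin n) :
    2 * |((σ j : ℕ) : ℝ) - ((j : ℕ) : ℝ)| ≤ displacement σ := by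
  have hzero : ∑ i : Fin n, (((σ i : ℕ) : ℝ) - ((i : ℕ) : ℝ)) = 0 := by
    rw [Finset.sum_sub_distrib, Equiv.sum_comp σ (fun i : Fin n => ((i : ℕ) : ℝ)), sub_self]
  rw [← Finset.add_sum_erase _ _ (Finset.mem_univ j)] at hzero
  have habs := Finset.abs_sum_le_sum_abs (fun i : Fin n => ((σ i : ℕ) : ℝ) - ((i : ℕ) : ℝ))
    (Finset.univ.erase j)
  rw [eq_neg_of_add_eq_zero_right hzero, abs_neg] at habs
  rw [displacement, ← Finset.add_sum_erase _ _ (Finset.mem_univ j)]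
  linarith

/-- Total displacement is additive over splitting off the cycle through `j`. -/
lemma displacement_eq_add {n : ℕ} (σ : Equiv.Perm (Fin n)) (j : Fin n) :
    displacement σ = displacement (σ.cycleOf j) + displacement (σ * (σ.cycleOf j)⁻¹) := by
  unfold displacement
  rw [← Finset.sum_add_distrib]
  refine Finset.sum_congr rfl fun i _ => ?_
  by_cases h : σ.SameCycle j i
  · have h1 : (σ.cycleOf j)⁻¹ i = σ⁻¹ i := by
      rw [Equiv.Perm.cycleOf_inv, Equiv.Perm.cycleOf_apply,
        if_pos (Equiv.Perm.sameCycle_inv.2 h)]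
    rw [h.cycleOf_apply, Equiv.Perm.mul_apply, h1]
    simp
  · have h1 : (σ.cycleOf j)⁻¹ i = i := by
      rw [Equiv.Perm.cycleOf_inv, Equiv.Perm.cycleOf_apply,
        if_neg (fun h' => h (Equiv.Perm.sameCycle_inv.1 h'))]
    rw [Equiv.Perm.cycleOf_apply_of_not_sameCycle h, Equiv.Perm.mul_apply, h1]
    simp

/-- The `i`-th step, as an integer, of the orbit of `j` under `c`. -/
def orbitStep {n : ℕ} (j : Fin n) (c : Equiv.Perm (Fin n)) (i : ℕ) : ℤ :=
  (((c ^ (i + 1)) j : Fin n) : ℤ) - (((c ^ i) j : Fin n) : ℤ)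

lemma pow_apply_injOn {n : ℕ} {j : Fin n} {c : Equiv.Perm (Fin n)} (hc : c.IsCycle)
    (hj : c j ≠ j) : Function.Injective (fun i : Fin (orderOf c) => (c ^ (i : ℕ)) j) := by
  intro a b hab
  have h : c ^ (a : ℕ) = c ^ (b : ℕ) := hc.pow_eq_pow_iff.2 ⟨j, hj, hab⟩
  exact Fin.ext (pow_injOn_Iio_orderOf a.2 b.2 h)

lemma sum_orbitStep_le {n : ℕ} {j : Fin n} {c : Equiv.Perm (Fin n)} (hc : c.IsCycle)
    (hj : c j ≠ j) :
    ∑ i : Fin (orderOf c), |(orbitStep j c i : ℝ)| ≤ displacement c := by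
  have h := Finset.sum_le_sum_of_subset_of_nonneg
    (f := fun x : Fin n => |((c x : ℕ) : ℝ) - ((x : ℕ) : ℝ)|)
    (Finset.subset_univ (Finset.univ.image (fun i : Fin (orderOf c) => (c ^ (i : ℕ)) j)))
    (fun _ _ _ => abs_nonneg _)
  rw [Finset.sum_image (fun a _ b _ hab => pow_apply_injOn hc hj hab)] at h
  refine le_trans (le_of_eq (Finset.sum_congr rfl fun i _ => ?_)) h
  simp [orbitStep, pow_succ']

/-- A cycle through `j` of order `k` is determined by its first `k` orbit steps from `j`. -/
lemma eq_of_orbitStep_eq {n k : ℕ} {j : Fin n} {c d : Equiv.Perm (Fin n)} (hc : c.IsCycle)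
    (hd : d.IsCycle) (hcj : c j ≠ j) (hdj : d j ≠ j) (hck : orderOf c = k) (hdk : orderOf d = k)
    (h : ∀ i < k, orbitStep j c i = orbitStep j d i) : c = d := by
  have hk : 0 < k := hck ▸ orderOf_pos c
  have hlt : ∀ i ≤ k, (c ^ i) j = (d ^ i) j := by
    intro i
    induction i with
    | zero => simp
    | succ i ih =>
      intro hi
      have h1 := h i (by omega)
      have h2 := ih (by omega)
      unfold orbitStep at h1
      rw [h2] at h1
      exact Fin.ext (by omega)
  have hall : ∀ i, (c ^ i) j = (d ^ i) j := by
    intro i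
    rw [← pow_mod_orderOf c, ← pow_mod_orderOf d, hck, hdk]
    exact hlt _ (Nat.mod_lt _ hk).le
  have key : ∀ i, c ((c ^ i) j) = d ((c ^ i) j) := by
    intro i
    have h1 := hall (i + 1)
    rw [pow_succ', pow_succ', Equiv.Perm.mul_apply, Equiv.Perm.mul_apply, ← hall i] at h1
    exact h1
  ext1 x
  by_cases hx : c x = x
  · by_cases hy : d x = x
    · rw [hx, hy]
    · obtain ⟨i, rfl⟩ := hd.exists_pow_eq hdj hy
      rw [← hall i]
      exact key i
  · obtain ⟨i, rfl⟩ := hc.exists_pow_eq hcj hx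
    exact key i

lemma exp_neg_three_halves_le : Real.exp (-(3 / 2)) ≤ 1 / 4 := by
  have h1 : (Real.exp (-(3 / 2))) ^ 2 * (Real.exp 1) ^ 3 = 1 := by
    rw [← Real.exp_nat_mul, ← Real.exp_nat_mul, ← Real.exp_add]
    norm_num
  have h2 : (16 : ℝ) ≤ (Real.exp 1) ^ 3 := by
    have := Real.exp_one_gt_d9
    calc (16 : ℝ) ≤ 2.7 ^ 3 := by norm_num
      _ ≤ _ := by gcongr; linarith
  have h3 := Real.exp_pos (-(3 / 2))
  nlinarith [mul_le_mul_of_nonneg_left h2 (sq_nonneg (Real.exp (-(3 / 2))))]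

/-- The possible nonzero steps between two points of `Fin n` (and two harmless extra ones). -/
noncomputable def stepSet (n : ℕ) : Finset ℤ := (Finset.Icc (-(n : ℤ)) n).erase 0

lemma sum_stepSet_le (n : ℕ) :
    ∑ s ∈ stepSet n, Real.exp (-(3 / 2) * |(s : ℝ)|) ≤ 2 / 3 * (1 - (1 / 4) ^ n) := by
  induction n with
  | zero => simp [stepSet]
  | succ n ih =>
    have hset : stepSet (n + 1) = insert ((n : ℤ) + 1) (insert (-((n : ℤ) + 1)) (stepSet n)) := by
      ext x
      simp only [stepSet, Finset.mem_erase, Finset.mem_Icc, Finset.mem_insert]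
      push_cast
      omega
    have hexp : Real.exp (-(3 / 2) * ((n : ℝ) + 1)) ≤ (1 / 4) ^ (n + 1) := by
      have : Real.exp (-(3 / 2) * ((n : ℝ) + 1)) = Real.exp (-(3 / 2)) ^ (n + 1) := by
        rw [← Real.exp_nat_mul]
        push_cast
        ring_nf
      rw [this]
      exact pow_le_pow_left₀ (Real.exp_pos _).le exp_neg_three_halves_le _
    have habs : |(n : ℝ) + 1| = n + 1 := abs_of_nonneg (by positivity)
    rw [hset, Finset.sum_insert, Finset.sum_insert]
    · push_cast
      rw [abs_neg, habs]
      have hp : ((1 : ℝ) / 4) ^ (n + 1) = (1 / 4) ^ n * (1 / 4) := pow_succ _ _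
      linarith
    · simp [stepSet]
    · simp only [stepSet, Finset.mem_erase, Finset.mem_Icc, Finset.mem_insert]
      omega

/-- The cycles of order `k` through `j` have total `exp(-(3/2) w)`-weight at most `(2/3) ^ k`. -/
lemma sum_cycles_order_le {n : ℕ} (j : Fin n) (k : ℕ) :
    ∑ c : Equiv.Perm (Fin n) with (c.IsCycle ∧ c j ≠ j) ∧ orderOf c = k,
      Real.exp (-(3 / 2) * displacement c) ≤ (2 / 3) ^ k := by
  set f : ℤ → ℝ := fun s => Real.exp (-(3 / 2) * |(s : ℝ)|) with hf
  set g : Equiv.Perm (Fin n) → (Fin k → ℤ) := fun c i => orbitStep j c i with hg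
  set A := Finset.univ.filter
    (fun c : Equiv.Perm (Fin n) => (c.IsCycle ∧ c j ≠ j) ∧ orderOf c = k) with hA
  have hinj : Set.InjOn g A := by
    intro c hc d hd hcd
    simp only [hA, Finset.coe_filter, Finset.mem_univ, true_and, Set.mem_ofPred_eq] at hc hd
    exact eq_of_orbitStep_eq hc.1.1 hd.1.1 hc.1.2 hd.1.2 hc.2 hd.2
      fun i hi => congrFun hcd ⟨i, hi⟩
  have hmem : A.image g ⊆ Fintype.piFinset (fun _ : Fin k => stepSet n) := by
    intro s hs
    obtain ⟨c, hc, rfl⟩ := Finset.mem_image.1 hs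
    simp only [hA, Finset.mem_filter, Finset.mem_univ, true_and] at hc
    refine Fintype.mem_piFinset.2 fun i => ?_
    have hne : (c ^ ((i : ℕ) + 1)) j ≠ (c ^ (i : ℕ)) j := by
      rw [pow_succ, Equiv.Perm.mul_apply]
      exact fun h => hc.1.2 ((c ^ (i : ℕ)).injective h)
    have hne' := fun h => hne (Fin.ext h)
    simp only [stepSet, hg, orbitStep, Finset.mem_erase, Finset.mem_Icc]
    omega
  calc ∑ c ∈ A, Real.exp (-(3 / 2) * displacement c)
      ≤ ∑ c ∈ A, ∏ i, f (g c i) := by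
        refine Finset.sum_le_sum fun c hc => ?_
        simp only [hA, Finset.mem_filter, Finset.mem_univ, true_and] at hc
        obtain ⟨⟨hcyc, hcj⟩, rfl⟩ := hc
        rw [hf, ← Real.exp_sum, ← Finset.mul_sum]
        have := sum_orbitStep_le hcyc hcj
        exact Real.exp_le_exp.2 (by simp only [hg]; linarith)
    _ = ∑ s ∈ A.image g, ∏ i, f (s i) :=
        (Finset.sum_image (f := fun s : Fin k → ℤ => ∏ i, f (s i)) hinj).symm
    _ ≤ ∑ s ∈ Fintype.piFinset (fun _ : Fin k => stepSet n), ∏ i, f (s i) :=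
        Finset.sum_le_sum_of_subset_of_nonneg hmem
          fun _ _ _ => Finset.prod_nonneg fun _ _ => (Real.exp_pos _).le
    _ = (∑ s ∈ stepSet n, f s) ^ k := by
        rw [← Finset.prod_univ_sum]
        simp
    _ ≤ (2 / 3) ^ k := by
        refine pow_le_pow_left₀ (Finset.sum_nonneg fun _ _ => (Real.exp_pos _).le) ?_ _
        have h1 := sum_stepSet_le n
        have h2 : (0 : ℝ) < (1 / 4) ^ n := by positivity
        linarith

lemma sum_cycles_le {n : ℕ} (j : Fin n) :
    ∑ c : Equiv.Perm (Fin n) with c.IsCycle ∧ c j ≠ j,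
      Real.exp (-(3 / 2) * displacement c) ≤ 3 := by
  have hmaps : ∀ c ∈ Finset.univ.filter (fun c : Equiv.Perm (Fin n) => c.IsCycle ∧ c j ≠ j),
      orderOf c ∈ Finset.range (n + 1) := by
    intro c hc
    simp only [Finset.mem_filter, Finset.mem_univ, true_and] at hc
    rw [Finset.mem_range, hc.1.orderOf]
    have := Finset.card_le_univ c.support
    rw [Fintype.card_fin] at this
    omega
  rw [← Finset.sum_fiberwise_of_maps_to hmaps]
  calc _ ≤ ∑ k ∈ Finset.range (n + 1), ((2 : ℝ) / 3) ^ k := by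
        refine Finset.sum_le_sum fun k _ => ?_
        rw [Finset.filter_filter]
        exact sum_cycles_order_le j k
    _ ≤ 3 := by
        have h := geom_sum_eq (x := (2 : ℝ) / 3) (by norm_num) (n + 1)
        have hp : (0 : ℝ) < (2 / 3) ^ (n + 1) := by positivity
        rw [h, div_le_iff_of_neg (by norm_num)]
        linarith

/-- The permutations whose cycle through `j` is `c` carry a fraction at most
`exp(-β w(c))` of the total Mallows weight. -/
lemma sum_cycleOf_eq_le {n : ℕ} (β : ℝ) (j : Fin n) (c : Equiv.Perm (Fin n))
    (S : Finset (Equiv.Perm (Fin n))) (hS : ∀ σ ∈ S, σ.cycleOf j = c) :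
    ∑ σ ∈ S, mallowsWeight n β σ ≤
      Real.exp (-β * displacement c) * ∑ τ : Equiv.Perm (Fin n), mallowsWeight n β τ := by
  calc ∑ σ ∈ S, mallowsWeight n β σ
      = ∑ σ ∈ S, Real.exp (-β * displacement c) * mallowsWeight n β (σ * c⁻¹) := by
        refine Finset.sum_congr rfl fun σ hσ => ?_
        rw [mallowsWeight_eq, mallowsWeight_eq, displacement_eq_add σ j, hS σ hσ,
          ← Real.exp_add, mul_add]
    _ ≤ ∑ σ : Equiv.Perm (Fin n), Real.exp (-β * displacement c) * mallowsWeight n β (σ * c⁻¹) :=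
        Finset.sum_le_sum_of_subset_of_nonneg (Finset.subset_univ S)
          fun _ _ _ => mul_nonneg (Real.exp_pos _).le (Real.exp_pos _).le
    _ = _ := by
        rw [← Finset.mul_sum]
        congr 1
        exact Equiv.sum_comp (Equiv.mulRight c⁻¹) (fun τ => mallowsWeight n β τ)

lemma mallowsP_le {n : ℕ} (β : ℝ) (hβ : 2 ≤ β) (j : Fin n) (u : ℕ) (hu : 0 < u) :
    mallowsP n β (fun σ => (u : ℝ) ≤ |((σ j : ℕ) : ℝ) - ((j : ℕ) : ℝ)|)
      ≤ Real.exp (-((2 * u) * (β - 3 / 2))) * 3 := by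
  have hu' : (0 : ℝ) < u := by exact_mod_cast hu
  set Z := ∑ τ : Equiv.Perm (Fin n), mallowsWeight n β τ with hZ
  have hZpos : 0 < Z :=
    Finset.sum_pos (fun τ _ => Real.exp_pos _) Finset.univ_nonempty
  set E := Finset.univ.filter
    (fun σ : Equiv.Perm (Fin n) => (u : ℝ) ≤ |((σ j : ℕ) : ℝ) - ((j : ℕ) : ℝ)|) with hE
  set B := E.filter (fun c => c.IsCycle ∧ c j ≠ j) with hB
  have hmaps : ∀ σ ∈ E, σ.cycleOf j ∈ B := by
    intro σ hσ
    simp only [hE, Finset.mem_filter, Finset.mem_univ, true_and] at hσ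
    have hne : σ j ≠ j := by
      intro h
      rw [h, sub_self, abs_zero] at hσ
      linarith
    simp only [hB, hE, Finset.mem_filter, Finset.mem_univ, true_and,
      Equiv.Perm.cycleOf_apply_self]
    exact ⟨hσ, Equiv.Perm.isCycle_cycleOf σ hne, hne⟩
  have hP : mallowsP n β (fun σ => (u : ℝ) ≤ |((σ j : ℕ) : ℝ) - ((j : ℕ) : ℝ)|)
      = (∑ σ ∈ E, mallowsWeight n β σ) / Z := by
    rw [mallowsP, Finset.sum_div, hE, Finset.sum_filter]
    rfl
  rw [hP, div_le_iff₀ hZpos, ← Finset.sum_fiberwise_of_maps_to hmaps]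
  calc _ ≤ ∑ c ∈ B, Real.exp (-β * displacement c) * Z :=
        Finset.sum_le_sum fun c _ => sum_cycleOf_eq_le β j c _
          fun σ hσ => (Finset.mem_filter.1 hσ).2
    _ ≤ ∑ c ∈ B, Real.exp (-((2 * u) * (β - 3 / 2))) *
          Real.exp (-(3 / 2) * displacement c) * Z := by
        refine Finset.sum_le_sum fun c hc => ?_
        simp only [hB, hE, Finset.mem_filter, Finset.mem_univ, true_and] at hc
        have h1 := two_mul_le_displacement c j
        refine mul_le_mul_of_nonneg_right ?_ hZpos.le
        rw [← Real.exp_add]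
        exact Real.exp_le_exp.2 (by nlinarith [hc.1])
    _ = Real.exp (-((2 * u) * (β - 3 / 2))) *
          (∑ c ∈ B, Real.exp (-(3 / 2) * displacement c)) * Z := by
        rw [← Finset.sum_mul, ← Finset.mul_sum]
    _ ≤ _ := by
        gcongr
        refine le_trans ?_ (sum_cycles_le j)
        exact Finset.sum_le_sum_of_subset_of_nonneg
          (Finset.filter_subset_filter _ (Finset.subset_univ E))
          fun _ _ _ => (Real.exp_pos _).le

/-- There is an absolute constant `C > 0` such that for all `n ≥ 1`, `β ≥ 2`, `j ∈ [n]`,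
and positive integers `u`: `P_{n,β}(|σ(j) - j| ≥ u) ≤ C exp(-(2β + √u/2))`. -/
theorem statement7 :
    ∃ C : ℝ, 0 < C ∧
      ∀ n : ℕ, 0 < n → ∀ β : ℝ, 2 ≤ β → ∀ j : Fin n, ∀ u : ℕ, 0 < u →
        mallowsP n β (fun σ => (u : ℝ) ≤ |((σ j : ℕ) : ℝ) - ((j : ℕ) : ℝ)|)
          ≤ C * Real.exp (-(2 * β + Real.sqrt u / 2)) := by
  refine ⟨3 * Real.exp 4, by positivity, fun n _ β hβ j u hu => ?_⟩
  refine (mallowsP_le β hβ j u hu).trans ?_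
  have hu1 : (1 : ℝ) ≤ u := by exact_mod_cast hu
  have hsqrt : Real.sqrt u ≤ u := Real.sqrt_le_self_iff.2 (Or.inr hu1)
  rw [mul_comm, mul_assoc 3, ← Real.exp_add]
  gcongr
  nlinarith [mul_nonneg (sub_nonneg.2 hu1) (sub_nonneg.2 hβ)]
end
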